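/- arXiv:1612.09358 — 2 statements merged into one kernel-verified Lean document; each statement's English description precedes it below -/
import Mathlib

section
/- Let (y11, y12) and (y21, y22) be two solutions of the Berger boundary value problem with the same initial value y12(0) = y22(0), and suppose phi0 := exp(y12(0)) satisfies phi0 ≠ 1 and 1/4 < phi0 < 4. If moreover y11(0) = y21(0) (i.e. the two solutions have the same value K(0)), then (y11, y12) = (y21, y22) on all of [0,1]. -/
open Real Set

/-- Equation (E1) of the Berger Einstein ODE system:
`y1'' + (1/6)(y1')² + (1/3)(y2')² − x⁻¹(1+3x²)(1−x²)⁻¹ y1' = 0`. -/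
noncomputable def BergerE1 (y1 y2 : ℝ → ℝ) (x : ℝ) : ℝ :=
  deriv (deriv y1) x + (1/6) * (deriv y1 x)^2 + (1/3) * (deriv y2 x)^2
    - x⁻¹ * (1 + 3*x^2) * (1 - x^2)⁻¹ * deriv y1 x

/-- Equation (E2) of the Berger Einstein ODE system, with `K = exp ∘ y1`, `phi = exp ∘ y2`:
`y1'' + (1/2)(y1')² − x⁻¹(5+7x²)(1−x²)⁻¹ y1'
  + 8(1−x²)⁻²(6 − 8 K^{-1/3} phi^{-1/3} + 2 K^{-1/3} phi^{-4/3}) = 0`. -/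
noncomputable def BergerE2 (y1 y2 : ℝ → ℝ) (x : ℝ) : ℝ :=
  deriv (deriv y1) x + (1/2) * (deriv y1 x)^2
    - x⁻¹ * (5 + 7*x^2) * (1 - x^2)⁻¹ * deriv y1 x
    + 8 * ((1 - x^2)⁻¹)^2 *
      (6 - 8 * Real.exp (y1 x) ^ (-(1:ℝ)/3) * Real.exp (y2 x) ^ (-(1:ℝ)/3)
         + 2 * Real.exp (y1 x) ^ (-(1:ℝ)/3) * Real.exp (y2 x) ^ (-(4:ℝ)/3))

/-- Equation (E3) of the Berger Einstein ODE system, with `K = exp ∘ y1`, `phi = exp ∘ y2`: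
`y2'' + (1/2) y1' y2' − 2x⁻¹(1+2x²)(1−x²)⁻¹ y2'
  + 32(1−x²)⁻² K^{-1/3} phi^{-1/3}(phi⁻¹ − 1) = 0`. -/
noncomputable def BergerE3 (y1 y2 : ℝ → ℝ) (x : ℝ) : ℝ :=
  deriv (deriv y2) x + (1/2) * deriv y1 x * deriv y2 x
    - 2 * x⁻¹ * (1 + 2*x^2) * (1 - x^2)⁻¹ * deriv y2 x
    + 32 * ((1 - x^2)⁻¹)^2 * Real.exp (y1 x) ^ (-(1:ℝ)/3) * Real.exp (y2 x) ^ (-(1:ℝ)/3)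
      * ((Real.exp (y2 x))⁻¹ - 1)

/-- A solution of the Berger boundary value problem: a pair `(y1, y2)` smooth on `[0,1]`
(realized as globally smooth functions), real analytic on `(0,1]`, satisfying (E1)–(E3)
on `(0,1)`, with boundary conditions `K(1) = phi(1) = 1` (where `K = exp ∘ y1`,
`phi = exp ∘ y2`) and `y1'(0) = y2'(0) = y1'(1) = y2'(1) = 0`. -/
structure BergerBVPSolution (y1 y2 : ℝ → ℝ) : Prop where
  smooth1 : ContDiff ℝ (⊤ : ℕ∞) y1
  smooth2 : ContDiff ℝ (⊤ : ℕ∞) y2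
  analytic1 : AnalyticOnNhd ℝ y1 (Ioc 0 1)
  analytic2 : AnalyticOnNhd ℝ y2 (Ioc 0 1)
  eqE1 : ∀ x ∈ Ioo (0:ℝ) 1, BergerE1 y1 y2 x = 0
  eqE2 : ∀ x ∈ Ioo (0:ℝ) 1, BergerE2 y1 y2 x = 0
  eqE3 : ∀ x ∈ Ioo (0:ℝ) 1, BergerE3 y1 y2 x = 0
  bdryK : Real.exp (y1 1) = 1
  bdryPhi : Real.exp (y2 1) = 1
  der1_0 : deriv y1 0 = 0
  der2_0 : deriv y2 0 = 0
  der1_1 : deriv y1 1 = 0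
  der2_1 : deriv y2 1 = 0

/-!
The form of (E1) and (E3) is preserved by `(log phi, G) ↦ (-log phi, t ↦ -G (-t))`, `G` being the
zeroth order nonlinearity of (E3), so one may assume that `w = ±log phi` satisfies `w 0 ≥ 0`.
A minimum principle and `w 1 = 0` then give `0 ≤ w ≤ w 0`, with `w` decreasing, and on this range
`G` is monotone, because `phi ≤ 4`. The values `K 0` and `phi 0` determine the 2-jet of the solution
at the singular endpoint `0`, leaving `w''' 0` as the only free parameter. If two solutions with the
same `K 0` and `phi 0` had different `w''' 0`, the strict ordering of `w'` near `0` would propagate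
to all of `(0, 1)` by comparing the fluxes in the divergence forms of (E1) and (E3), contradicting
`w 1 = 0` for both. With equal `w''' 0`, a contraction argument at the singular endpoint shows that
the solutions agree near `0`, and analyticity carries this over to `(0, 1]`.
-/

open Filter Topology Asymptotics

/-! ### One-sided calculus at an endpoint -/

section Endpoint

variable {f f' : ℝ → ℝ} {a b L : ℝ}

theorem le_of_tendsto_nhdsGT_of_hasDerivAt_nonneg (hab : a < b)
    (hf : ∀ x ∈ Ioc a b, HasDerivAt f (f' x) x) (hf' : ∀ x ∈ Ioo a b, 0 ≤ f' x)
    (hL : Tendsto f (𝓝[>] a) (𝓝 L)) : L ≤ f b := by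
  have hmono : MonotoneOn f (Ioc a b) := by
    refine monotoneOn_of_hasDerivWithinAt_nonneg (convex_Ioc a b) (f' := f')
      (fun x hx => (hf x hx).continuousAt.continuousWithinAt) ?_ ?_ <;> rw [interior_Ioc]
    · exact fun x hx => (hf x (Ioo_subset_Ioc_self hx)).hasDerivWithinAt
    · exact hf'
  refine le_of_tendsto hL ?_
  filter_upwards [Ioc_mem_nhdsGT hab] with x hx using hmono hx (right_mem_Ioc.2 hab) hx.2

theorem abs_sub_le_of_tendsto_nhdsGT_of_abs_deriv_le {B : ℝ} (hab : a < b)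
    (hf : ∀ x ∈ Ioc a b, HasDerivAt f (f' x) x) (hf' : ∀ x ∈ Ioo a b, |f' x| ≤ B)
    (hL : Tendsto f (𝓝[>] a) (𝓝 L)) : |f b - L| ≤ B * (b - a) := by
  have hlin : ∀ x, HasDerivAt (fun x => B * (x - a)) B x := fun x => by
    simpa using ((hasDerivAt_id x).sub_const a).const_mul B
  have hlim : Tendsto (fun x => B * (x - a)) (𝓝[>] a) (𝓝 0) := by
    simpa using (hlin a).continuousAt.tendsto.mono_left nhdsWithin_le_nhds
  have hupper := le_of_tendsto_nhdsGT_of_hasDerivAt_nonneg hab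
    (fun x hx => (hlin x).fun_sub (hf x hx))
    (fun x hx => sub_nonneg.2 ((le_abs_self _).trans (hf' x hx))) (hlim.sub hL)
  have hlower := le_of_tendsto_nhdsGT_of_hasDerivAt_nonneg hab
    (fun x hx => (hlin x).fun_add (hf x hx))
    (fun x hx => by linarith [neg_abs_le (f' x), hf' x hx]) (hlim.add hL)
  exact abs_le.2 ⟨by linarith, by linarith⟩

theorem le_of_forall_hasDerivAt_le {g g' : ℝ → ℝ} (hab : a < b)
    (hf : ∀ x, HasDerivAt f (f' x) x) (hg : ∀ x, HasDerivAt g (g' x) x) (h : f a = g a)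
    (hle : ∀ x ∈ Ioo a b, f' x ≤ g' x) : f b ≤ g b := by
  have hlim : Tendsto (fun x => g x - f x) (𝓝[>] a) (𝓝 0) := by
    simpa [h] using ((hg a).fun_sub (hf a)).continuousAt.tendsto.mono_left nhdsWithin_le_nhds
  exact sub_nonneg.1 (le_of_tendsto_nhdsGT_of_hasDerivAt_nonneg hab (f := fun x => g x - f x)
    (fun x _ => (hg x).fun_sub (hf x)) (fun x hx => sub_nonneg.2 (hle x hx)) hlim)

theorem tendsto_div_self_of_hasDerivAt {l : ℝ} (hf : HasDerivAt f l 0) (h0 : f 0 = 0) :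
    Tendsto (fun x => f x / x) (𝓝[>] 0) (𝓝 l) := by
  simpa [h0, div_eq_inv_mul] using hf.tendsto_slope_zero_right

theorem tendsto_div_sq_of_hasDerivAt {l : ℝ} (hf : ∀ᶠ x in 𝓝 0, HasDerivAt f (f' x) x)
    (hf' : HasDerivAt f' l 0) (h0 : f 0 = 0) (h0' : f' 0 = 0) :
    Tendsto (fun x => f x / x ^ 2) (𝓝[>] 0) (𝓝 (l / 2)) := by
  have hsq : ∀ x : ℝ, HasDerivAt (fun x => x ^ 2) (2 * x) x := fun x => by
    simpa using hasDerivAt_pow 2 x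
  refine HasDerivAt.lhopital_zero_nhdsGT (hf.filter_mono nhdsWithin_le_nhds)
    (Eventually.of_forall hsq) ?_ ?_ ?_ ?_
  · filter_upwards [self_mem_nhdsWithin] with x hx using (mul_pos two_pos hx).ne'
  · simpa [h0] using hf.self_of_nhds.continuousAt.tendsto.mono_left nhdsWithin_le_nhds
  · simpa using (hsq 0).continuousAt.tendsto.mono_left nhdsWithin_le_nhds
  · refine ((tendsto_div_self_of_hasDerivAt hf' h0').div_const 2).congr fun x => ?_
    rw [div_div, mul_comm]

/-- Letting `x → 0⁺` in a regular singular equation `f' = p f / x + r`. -/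
theorem deriv_zero_of_singular_equation {p r : ℝ → ℝ} (hf : Differentiable ℝ f)
    (hf' : ContinuousAt (deriv f) 0) (hp : ContinuousAt p 0) (hr : ContinuousAt r 0)
    (h0 : f 0 = 0) (heq : ∀ᶠ x in 𝓝[>] 0, deriv f x = p x * (f x / x) + r x) :
    deriv f 0 = p 0 * deriv f 0 + r 0 := by
  have hquot := tendsto_div_self_of_hasDerivAt (hf 0).hasDerivAt h0
  exact tendsto_nhds_unique (hf'.tendsto.mono_left nhdsWithin_le_nhds)
    ((((hp.tendsto.mono_left nhdsWithin_le_nhds).mul hquot).add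
      (hr.tendsto.mono_left nhdsWithin_le_nhds)).congr' (heq.mono fun x hx => hx.symm))

end Endpoint

theorem forall_mem_Ioo_of_eventually_nhdsGT {α : Type*} [ConditionallyCompleteLinearOrder α]
    [TopologicalSpace α] [OrderTopology α] {p : α → Prop} {a b : α}
    (ha : ∀ᶠ x in 𝓝[>] a, p x) (hright : ∀ x ∈ Ioo a b, p x → ∀ᶠ y in 𝓝[>] x, p y)
    (hlimit : ∀ c ∈ Ioo a b, (∀ x ∈ Ioo a c, p x) → p c) : ∀ x ∈ Ioo a b, p x := by
  by_contra! hfail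
  obtain ⟨d, hd, hpd⟩ := hfail
  set S := {x ∈ Ioo a b | ¬ p x}
  set c := sInf S
  have hbdd : BddBelow S := ⟨a, fun x hx => hx.1.1.le⟩
  have hac : a ≤ c := le_csInf ⟨d, hd, hpd⟩ fun x hx => hx.1.1.le
  have hcd : c ≤ d := csInf_le hbdd ⟨hd, hpd⟩
  have hpc : a < c → p c := fun h => hlimit c ⟨h, hcd.trans_lt hd.2⟩ fun x hx =>
    by_contra fun hpx => (csInf_le hbdd ⟨⟨hx.1, hx.2.trans (hcd.trans_lt hd.2)⟩, hpx⟩).not_gt hx.2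
  have hnear : ∀ᶠ y in 𝓝[>] c, p y := by
    rcases hac.eq_or_lt with h | h
    · rwa [← h]
    · exact hright c ⟨h, hcd.trans_lt hd.2⟩ (hpc h)
  obtain ⟨u, hcu, hu⟩ :=
    (mem_nhdsGT_iff_exists_Ioo_subset' (hcd.trans_lt hd.2)).1 hnear
  refine (le_csInf ⟨d, hd, hpd⟩ fun x hx => ?_ : u ≤ c).not_gt hcu
  by_contra! hxu
  have hcx : c ≤ x := csInf_le hbdd hx
  rcases hcx.eq_or_lt with h | h
  · exact hx.2 (h ▸ hpc (hx.1.1.trans_eq h.symm))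
  · exact hx.2 (hu ⟨h, hxu⟩)

theorem eqOn_Ioc_of_eventuallyEq_nhdsGT {E : Type*} [NormedAddCommGroup E] [NormedSpace ℝ E]
    {f g : ℝ → E} {a b : ℝ} (hf : AnalyticOnNhd ℝ f (Ioc a b)) (hg : AnalyticOnNhd ℝ g (Ioc a b))
    (h : f =ᶠ[𝓝[>] a] g) : EqOn f g (Ioc a b) := by
  intro x hx
  obtain ⟨u, hu, hfg⟩ := mem_nhdsGT_iff_exists_Ioo_subset.1 h
  obtain ⟨c, hac, hc⟩ := exists_between (lt_min hu (hx.1.trans_le hx.2))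
  exact hf.eqOn_of_preconnected_of_eventuallyEq hg isPreconnected_Ioc
    ⟨hac, (hc.trans_le (min_le_right u b)).le⟩
    (mem_of_superset (Ioo_mem_nhds hac (hc.trans_le (min_le_left u b))) hfg) hx

theorem eq_zero_of_norm_bound_halves {α E : Type*} [NormedAddCommGroup E] {f : α → E} {s : Set α}
    {M : ℝ} (hM : ∀ x ∈ s, ‖f x‖ ≤ M)
    (hhalf : ∀ M, (∀ x ∈ s, ‖f x‖ ≤ M) → ∀ x ∈ s, ‖f x‖ ≤ M / 2) : ∀ x ∈ s, f x = 0 := by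
  have hiter : ∀ n : ℕ, ∀ x ∈ s, ‖f x‖ ≤ M * (1 / 2) ^ n := fun n => by
    induction n with
    | zero => simpa using hM
    | succ n ih => simpa [pow_succ, div_eq_mul_inv, mul_assoc] using hhalf _ ih
  have hlim : Tendsto (fun n : ℕ => M * (1 / 2 : ℝ) ^ n) atTop (𝓝 0) := by
    simpa using (tendsto_pow_atTop_nhds_zero_of_lt_one (r := (1 / 2 : ℝ))
      (by norm_num) (by norm_num)).const_mul M
  exact fun x hx => norm_le_zero_iff.1 (ge_of_tendsto' hlim fun n => hiter n x hx)

/-! ### Uniqueness at the singular endpoint -/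

/-- The differential inequalities, on `(0, δ)` and with an explicit constant `C`, that the
difference `(z₁, z₂)` of two solutions and the fluxes `U`, `W` of that difference satisfy at the
regular singular point `0`. The functions `z₁'`, `z₂'`, `U'`, `W'` are the derivatives. -/
structure SingularSystem (C δ : ℝ) (z₁ z₂ U W z₁' z₂' U' W' : ℝ → ℝ) : Prop where
  hasDerivAt_z₁ : ∀ x ∈ Ioo 0 δ, HasDerivAt z₁ (z₁' x) x
  hasDerivAt_z₂ : ∀ x ∈ Ioo 0 δ, HasDerivAt z₂ (z₂' x) x
  hasDerivAt_U : ∀ x ∈ Ioo 0 δ, HasDerivAt U (U' x) x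
  hasDerivAt_W : ∀ x ∈ Ioo 0 δ, HasDerivAt W (W' x) x
  tendsto_z₁ : Tendsto z₁ (𝓝[>] 0) (𝓝 0)
  tendsto_z₂ : Tendsto z₂ (𝓝[>] 0) (𝓝 0)
  tendsto_U : Tendsto U (𝓝[>] 0) (𝓝 0)
  tendsto_W : Tendsto W (𝓝[>] 0) (𝓝 0)
  abs_z₁'_le : ∀ x ∈ Ioo 0 δ, |z₁' x| ≤ C * |x * U x|
  abs_z₂'_le : ∀ x ∈ Ioo 0 δ, |z₂' x| ≤ C * max |x ^ 2 * W x| |x * z₁ x|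
  abs_U'_le : ∀ x ∈ Ioo 0 δ, |U' x| ≤ C * |z₂' x|
  abs_W'_le : ∀ x ∈ Ioo 0 δ, |x ^ 2 * W' x| ≤ C * max |z₁ x| |z₂ x|

namespace SingularSystem

variable {C δ M : ℝ} {z₁ z₂ U W z₁' z₂' U' W' : ℝ → ℝ}

theorem abs_z₁_le (h : SingularSystem C δ z₁ z₂ U W z₁' z₂' U' W') (hC : 0 ≤ C)
    (hU : ∀ x ∈ Ioo 0 δ, |U x| ≤ M) : ∀ x ∈ Ioo 0 δ, |z₁ x| ≤ C * M * x ^ 2 := by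
  intro x hx
  have hsub : Ioc 0 x ⊆ Ioo 0 δ := Ioc_subset_Ioo_right hx.2
  have hbound : ∀ t ∈ Ioo 0 x, |z₁' t| ≤ C * (x * M) := fun t ht =>
    calc |z₁' t| ≤ C * (t * |U t|) := by
          simpa [abs_mul, abs_of_pos ht.1] using h.abs_z₁'_le t (hsub (Ioo_subset_Ioc_self ht))
      _ ≤ C * (x * M) := by
          have := hU t (hsub (Ioo_subset_Ioc_self ht))
          have := ht.2.le
          have := hx.1.le
          gcongr
  have := abs_sub_le_of_tendsto_nhdsGT_of_abs_deriv_le hx.1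
    (fun t ht => h.hasDerivAt_z₁ t (hsub ht)) hbound h.tendsto_z₁
  simp only [sub_zero] at this
  linarith

theorem abs_deriv_z₂_le (h : SingularSystem C δ z₁ z₂ U W z₁' z₂' U' W') (hC : 1 ≤ C)
    (hδ : δ ≤ 1) (hU : ∀ x ∈ Ioo 0 δ, |U x| ≤ M) (hW : ∀ x ∈ Ioo 0 δ, |W x| ≤ M) :
    ∀ x ∈ Ioo 0 δ, |z₂' x| ≤ C ^ 2 * M * x ^ 2 := by
  intro x hx
  have hM : 0 ≤ M := (abs_nonneg _).trans (hU x hx)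
  have hfluxTerm : |x ^ 2 * W x| ≤ C * M * x ^ 2 :=
    calc |x ^ 2 * W x| = x ^ 2 * |W x| := by rw [abs_mul, abs_of_pos (pow_pos hx.1 2)]
      _ ≤ x ^ 2 * M := by gcongr; exact hW x hx
      _ ≤ C * M * x ^ 2 := by nlinarith [mul_nonneg hM (sq_nonneg x)]
  have hz₁Term : |x * z₁ x| ≤ C * M * x ^ 2 :=
    calc |x * z₁ x| = x * |z₁ x| := by rw [abs_mul, abs_of_pos hx.1]
      _ ≤ |z₁ x| := mul_le_of_le_one_left (abs_nonneg _) (hx.2.le.trans hδ)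
      _ ≤ C * M * x ^ 2 := h.abs_z₁_le (zero_le_one.trans hC) hU x hx
  calc |z₂' x| ≤ C * (C * M * x ^ 2) :=
        (h.abs_z₂'_le x hx).trans (by gcongr; exact max_le hfluxTerm hz₁Term)
    _ = C ^ 2 * M * x ^ 2 := by ring

theorem abs_z₂_le (h : SingularSystem C δ z₁ z₂ U W z₁' z₂' U' W') (hC : 1 ≤ C) (hδ : δ ≤ 1)
    (hU : ∀ x ∈ Ioo 0 δ, |U x| ≤ M) (hW : ∀ x ∈ Ioo 0 δ, |W x| ≤ M) :
    ∀ x ∈ Ioo 0 δ, |z₂ x| ≤ C ^ 2 * M * x ^ 2 := by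
  intro x hx
  have hM : 0 ≤ M := (abs_nonneg _).trans (hU x hx)
  have hsub : Ioc 0 x ⊆ Ioo 0 δ := Ioc_subset_Ioo_right hx.2
  have hbound : ∀ t ∈ Ioo 0 x, |z₂' t| ≤ C ^ 2 * M * x ^ 2 := fun t ht =>
    (h.abs_deriv_z₂_le hC hδ hU hW t (hsub (Ioo_subset_Ioc_self ht))).trans (by
      have := ht.1.le
      gcongr
      exact ht.2.le)
  have hz₂ := abs_sub_le_of_tendsto_nhdsGT_of_abs_deriv_le hx.1
    (fun t ht => h.hasDerivAt_z₂ t (hsub ht)) hbound h.tendsto_z₂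
  simp only [sub_zero] at hz₂
  exact hz₂.trans (mul_le_of_le_one_right (by positivity) (hx.2.le.trans hδ))

theorem abs_flux_le (h : SingularSystem C δ z₁ z₂ U W z₁' z₂' U' W') (hC : 1 ≤ C) (hδ : δ ≤ 1)
    (hU : ∀ x ∈ Ioo 0 δ, |U x| ≤ M) (hW : ∀ x ∈ Ioo 0 δ, |W x| ≤ M) :
    ∀ x ∈ Ioo 0 δ, |U x| ≤ C ^ 3 * M * x ∧ |W x| ≤ C ^ 3 * M * x := by
  intro x hx
  have hM : 0 ≤ M := (abs_nonneg _).trans (hU x hx)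
  have hsub : Ioc 0 x ⊆ Ioo 0 δ := Ioc_subset_Ioo_right hx.2
  have hU' : ∀ t ∈ Ioo 0 x, |U' t| ≤ C ^ 3 * M := fun t ht => by
    have htδ := hsub (Ioo_subset_Ioc_self ht)
    calc |U' t| ≤ C * (C ^ 2 * M * t ^ 2) :=
          (h.abs_U'_le t htδ).trans (by gcongr; exact h.abs_deriv_z₂_le hC hδ hU hW t htδ)
      _ = C ^ 3 * M * t ^ 2 := by ring
      _ ≤ C ^ 3 * M :=
          mul_le_of_le_one_right (by positivity) (pow_le_one₀ ht.1.le (htδ.2.le.trans hδ))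
  have hW' : ∀ t ∈ Ioo 0 x, |W' t| ≤ C ^ 3 * M := fun t ht => by
    have htδ := hsub (Ioo_subset_Ioc_self ht)
    have hz₁ : |z₁ t| ≤ C ^ 2 * M * t ^ 2 :=
      (h.abs_z₁_le (zero_le_one.trans hC) hU t htδ).trans (by gcongr; nlinarith)
    refine le_of_mul_le_mul_left ?_ (pow_pos ht.1 2)
    calc t ^ 2 * |W' t| = |t ^ 2 * W' t| := by rw [abs_mul, abs_of_pos (pow_pos ht.1 2)]
      _ ≤ C * (C ^ 2 * M * t ^ 2) := (h.abs_W'_le t htδ).trans (by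
          gcongr
          exact max_le hz₁ (h.abs_z₂_le hC hδ hU hW t htδ))
      _ = t ^ 2 * (C ^ 3 * M) := by ring
  have hUx := abs_sub_le_of_tendsto_nhdsGT_of_abs_deriv_le hx.1
    (fun t ht => h.hasDerivAt_U t (hsub ht)) hU' h.tendsto_U
  have hWx := abs_sub_le_of_tendsto_nhdsGT_of_abs_deriv_le hx.1
    (fun t ht => h.hasDerivAt_W t (hsub ht)) hW' h.tendsto_W
  simp only [sub_zero] at hUx hWx
  exact ⟨hUx, hWx⟩

theorem eq_zero (h : SingularSystem C δ z₁ z₂ U W z₁' z₂' U' W') (hC : 1 ≤ C) (hδ : δ ≤ 1)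
    (hCδ : C ^ 3 * δ ≤ 1 / 2) (hU : ∀ x ∈ Ioo 0 δ, |U x| ≤ M) (hW : ∀ x ∈ Ioo 0 δ, |W x| ≤ M) :
    ∀ x ∈ Ioo 0 δ, z₁ x = 0 ∧ z₂ x = 0 := by
  have hhalf : ∀ M, (∀ x ∈ Ioo 0 δ, ‖(U x, W x)‖ ≤ M) → ∀ x ∈ Ioo 0 δ, ‖(U x, W x)‖ ≤ M / 2 := by
    intro M hUW x hx
    have hM : 0 ≤ M := (norm_nonneg _).trans (hUW x hx)
    have hflux := h.abs_flux_le hC hδ (fun x hx => (norm_prod_le_iff.1 (hUW x hx)).1)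
      (fun x hx => (norm_prod_le_iff.1 (hUW x hx)).2) x hx
    have hx_half : C ^ 3 * M * x ≤ M / 2 :=
      calc C ^ 3 * M * x ≤ C ^ 3 * M * δ := by gcongr; exact hx.2.le
        _ = C ^ 3 * δ * M := by ring
        _ ≤ 1 / 2 * M := by gcongr
        _ = M / 2 := by ring
    exact norm_prod_le_iff.2 ⟨hflux.1.trans hx_half, hflux.2.trans hx_half⟩
  have hflux : ∀ x ∈ Ioo 0 δ, (U x, W x) = 0 := eq_zero_of_norm_bound_halves
    (fun x hx => norm_prod_le_iff.2 ⟨hU x hx, hW x hx⟩) hhalf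
  have hU0 : ∀ x ∈ Ioo 0 δ, |U x| ≤ 0 := fun x hx => by simp [(Prod.mk_eq_zero.1 (hflux x hx)).1]
  have hW0 : ∀ x ∈ Ioo 0 δ, |W x| ≤ 0 := fun x hx => by simp [(Prod.mk_eq_zero.1 (hflux x hx)).2]
  intro x hx
  constructor
  · simpa using h.abs_z₁_le (zero_le_one.trans hC) hU0 x hx
  · simpa using h.abs_z₂_le hC hδ hU0 hW0 x hx

end SingularSystem

theorem eventually_eq_zero_of_singular_system {z₁ z₂ U W z₁' z₂' U' W' : ℝ → ℝ}
    (dz₁ : ∀ᶠ x in 𝓝[>] 0, HasDerivAt z₁ (z₁' x) x)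
    (dz₂ : ∀ᶠ x in 𝓝[>] 0, HasDerivAt z₂ (z₂' x) x)
    (dU : ∀ᶠ x in 𝓝[>] 0, HasDerivAt U (U' x) x) (dW : ∀ᶠ x in 𝓝[>] 0, HasDerivAt W (W' x) x)
    (lz₁ : Tendsto z₁ (𝓝[>] 0) (𝓝 0)) (lz₂ : Tendsto z₂ (𝓝[>] 0) (𝓝 0))
    (lU : Tendsto U (𝓝[>] 0) (𝓝 0)) (lW : Tendsto W (𝓝[>] 0) (𝓝 0))
    (hz₁' : z₁' =O[𝓝[>] 0] fun x => x * U x)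
    (hz₂' : z₂' =O[𝓝[>] 0] fun x => (x ^ 2 * W x, x * z₁ x))
    (hU' : U' =O[𝓝[>] 0] z₂')
    (hW' : (fun x => x ^ 2 * W' x) =O[𝓝[>] 0] fun x => (z₁ x, z₂ x)) :
    ∀ᶠ x in 𝓝[>] 0, z₁ x = 0 ∧ z₂ x = 0 := by
  obtain ⟨C, hC, bz₁, bz₂, bU, bW⟩ : ∃ C, 1 ≤ C ∧ IsBigOWith C (𝓝[>] 0) z₁' (fun x => x * U x) ∧
      IsBigOWith C (𝓝[>] 0) z₂' (fun x => (x ^ 2 * W x, x * z₁ x)) ∧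
      IsBigOWith C (𝓝[>] 0) U' z₂' ∧
      IsBigOWith C (𝓝[>] 0) (fun x => x ^ 2 * W' x) (fun x => (z₁ x, z₂ x)) := by
    rw [isBigO_iff_eventually_isBigOWith] at hz₁' hz₂' hU' hW'
    exact ((eventually_ge_atTop 1).and (hz₁'.and (hz₂'.and (hU'.and hW')))).exists
  obtain ⟨ε, hε, hall⟩ := mem_nhdsGT_iff_exists_Ioo_subset.1 (dz₁.and (dz₂.and (dU.and (dW.and
    (bz₁.bound.and (bz₂.bound.and (bU.bound.and (bW.bound.and
      ((lU.abs.eventually_le_const (u := 1) (by simp)).and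
        (lW.abs.eventually_le_const (u := 1) (by simp)))))))))))
  obtain ⟨δ, hδε, hδ, hCδ⟩ : ∃ δ, δ ∈ Ioo 0 ε ∧ δ ≤ 1 ∧ C ^ 3 * δ ≤ 1 / 2 := by
    have hlin : Tendsto (fun δ => C ^ 3 * δ) (𝓝[>] 0) (𝓝 0) := by
      simpa using ((continuous_const_mul (C ^ 3)).tendsto 0).mono_left nhdsWithin_le_nhds
    refine Eventually.exists (f := 𝓝[>] 0) ?_
    filter_upwards [Ioo_mem_nhdsGT hε, Ioc_mem_nhdsGT one_pos,
      hlin.eventually_le_const (u := 1 / 2) (by norm_num)] with δ hδε hδ hCδ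
      using ⟨hδε, hδ.2, hCδ⟩
  have hsub := (Ioo_subset_Ioo_right hδε.2.le).trans hall
  simp only [subset_def, mem_ofPred_eq, imp_and, forall_and] at hsub
  obtain ⟨dz₁, dz₂, dU, dW, bz₁, bz₂, bU, bW, hU, hW⟩ := hsub
  exact mem_of_superset (Ioo_mem_nhdsGT hδε.1)
    (SingularSystem.eq_zero ⟨dz₁, dz₂, dU, dW, lz₁, lz₂, lU, lW, bz₁, bz₂, bU, bW⟩ hC hδ hCδ hU hW)

/-! ### The reduced system -/

/-- The equations (E1) and (E3) for `y = log K` and `w = log phi`, with the zeroth order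
nonlinearity of (E3) replaced by a general function `G`. Reflecting `G` turns a solution with
`log phi = -w` into one of the same form, see `ReducedBergerSolution.neg`. -/
structure ReducedBergerSolution (G y w : ℝ → ℝ) : Prop where
  contDiff_y : ContDiff ℝ 2 y
  contDiff_w : ContDiff ℝ 3 w
  eq_y : ∀ x ∈ Ioo 0 1, deriv (deriv y) x =
    x⁻¹ * (1 + 3 * x ^ 2) * (1 - x ^ 2)⁻¹ * deriv y x
      - (1 / 6) * deriv y x ^ 2 - (1 / 3) * deriv w x ^ 2
  eq_w : ∀ x ∈ Ioo 0 1, deriv (deriv w) x =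
    2 * x⁻¹ * (1 + 2 * x ^ 2) * (1 - x ^ 2)⁻¹ * deriv w x - (1 / 2) * deriv y x * deriv w x
      + 32 * ((1 - x ^ 2)⁻¹) ^ 2 * exp (-(y x) / 3) * G (w x)
  deriv_y_zero : deriv y 0 = 0
  deriv_w_zero : deriv w 0 = 0
  w_one : w 1 = 0

/-- The flux `x⁻² (1 - x²)³ K^{1/2} w'` attached to the divergence form of (E3). -/
noncomputable def bergerFlux (y w : ℝ → ℝ) (x : ℝ) : ℝ :=
  (x ^ 2)⁻¹ * (1 - x ^ 2) ^ 3 * exp (y x / 2) * deriv w x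

/-- The flux `x⁻¹ (1 - x²)² (Kₐ K_b)^{1/6} (yₐ' - y_b')` attached to the divergence form of the
difference of the equations (E1) for two solutions. -/
noncomputable def bergerDiffFlux (ya yb : ℝ → ℝ) (x : ℝ) : ℝ :=
  x⁻¹ * (1 - x ^ 2) ^ 2 * exp ((ya x + yb x) / 6) * (deriv ya x - deriv yb x)

theorem bergerFlux_sub (ya wa yb wb : ℝ → ℝ) (x : ℝ) :
    bergerFlux ya wa x - bergerFlux yb wb x = (1 - x ^ 2) ^ 3 *
      (exp (ya x / 2) * ((deriv wa x - deriv wb x) / x ^ 2)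
        + (exp (ya x / 2) - exp (yb x / 2)) / x * (deriv wb x / x)) := by
  unfold bergerFlux
  ring

theorem one_sub_sq_pos {x : ℝ} (hx : x ∈ Ioo (0 : ℝ) 1) : 0 < 1 - x ^ 2 := by
  nlinarith [hx.1, hx.2]

theorem deriv_deriv_nonneg_of_isLocalMin {f : ℝ → ℝ} {c : ℝ} (hf : ContinuousAt f c)
    (hmin : IsLocalMin f c) : 0 ≤ deriv (deriv f) c := by
  by_contra! hneg
  have hmax := isLocalMax_of_deriv_deriv_neg hneg hmin.deriv_eq_zero hf
  have hconst : f =ᶠ[𝓝 c] fun _ => f c := by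
    filter_upwards [hmin, hmax] with t h₁ h₂ using le_antisymm h₂ h₁
  simp [hconst.deriv.deriv_eq] at hneg

namespace ReducedBergerSolution

variable {G y w ya wa yb wb : ℝ → ℝ} {x : ℝ}

theorem contDiff_deriv_w (h : ReducedBergerSolution G y w) : ContDiff ℝ 2 (deriv w) :=
  ContDiff.deriv' (n := 2) h.contDiff_w

theorem hasDerivAt_y (h : ReducedBergerSolution G y w) (x : ℝ) : HasDerivAt y (deriv y x) x :=
  (h.contDiff_y.differentiable two_ne_zero x).hasDerivAt

theorem hasDerivAt_deriv_y (h : ReducedBergerSolution G y w) (x : ℝ) :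
    HasDerivAt (deriv y) (deriv (deriv y) x) x :=
  (h.contDiff_y.differentiable_deriv_two x).hasDerivAt

theorem hasDerivAt_w (h : ReducedBergerSolution G y w) (x : ℝ) : HasDerivAt w (deriv w x) x :=
  (h.contDiff_w.differentiable three_ne_zero x).hasDerivAt

theorem hasDerivAt_deriv_w (h : ReducedBergerSolution G y w) (x : ℝ) :
    HasDerivAt (deriv w) (deriv (deriv w) x) x :=
  (h.contDiff_deriv_w.differentiable two_ne_zero x).hasDerivAt

theorem hasDerivAt_deriv_deriv_w (h : ReducedBergerSolution G y w) (x : ℝ) :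
    HasDerivAt (deriv (deriv w)) (deriv (deriv (deriv w)) x) x :=
  (h.contDiff_deriv_w.differentiable_deriv_two x).hasDerivAt

theorem neg (h : ReducedBergerSolution G y w) :
    ReducedBergerSolution (fun t => -G (-t)) y (fun x => -w x) where
  contDiff_y := h.contDiff_y
  contDiff_w := h.contDiff_w.neg
  eq_y x hx := by simpa using h.eq_y x hx
  eq_w x hx := by
    simp only [deriv.fun_neg', deriv.fun_neg, neg_neg]
    linear_combination -h.eq_w x hx
  deriv_y_zero := h.deriv_y_zero
  deriv_w_zero := by simpa using h.deriv_w_zero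
  w_one := by simpa using h.w_one

theorem hasDerivAt_flux (h : ReducedBergerSolution G y w) (hx : x ∈ Ioo 0 1) :
    HasDerivAt (bergerFlux y w)
      (32 * (x ^ 2)⁻¹ * (1 - x ^ 2) * (exp (y x / 6) * G (w x))) x := by
  have hx0 : x ≠ 0 := hx.1.ne'
  have hx1 : 1 - x ^ 2 ≠ 0 := (one_sub_sq_pos hx).ne'
  have hinv : HasDerivAt (fun x : ℝ => (x ^ 2)⁻¹) (-(2 * x) / (x ^ 2) ^ 2) x := by
    simpa using (hasDerivAt_pow 2 x).fun_inv (pow_ne_zero 2 hx0)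
  have hpow : HasDerivAt (fun x : ℝ => (1 - x ^ 2) ^ 3) (3 * (1 - x ^ 2) ^ 2 * (-(2 * x))) x := by
    simpa using ((hasDerivAt_pow 2 x).const_sub 1).fun_pow 3
  have hexp : exp (y x / 6) = exp (y x / 2) * exp (-(y x) / 3) := by
    rw [← exp_add]
    ring_nf
  refine (((hinv.fun_mul hpow).fun_mul ((h.hasDerivAt_y x).div_const 2).exp).fun_mul
    (h.hasDerivAt_deriv_w x)).congr_deriv ?_
  rw [h.eq_w x hx, hexp]
  field_simp
  ring

theorem hasDerivAt_diffFlux (ha : ReducedBergerSolution G ya wa)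
    (hb : ReducedBergerSolution G yb wb) (hx : x ∈ Ioo 0 1) :
    HasDerivAt (bergerDiffFlux ya yb)
      (-(1 / 3) * x⁻¹ * (1 - x ^ 2) ^ 2 * exp ((ya x + yb x) / 6)
        * (deriv wa x + deriv wb x) * (deriv wa x - deriv wb x)) x := by
  have hx0 : x ≠ 0 := hx.1.ne'
  have hx1 : 1 - x ^ 2 ≠ 0 := (one_sub_sq_pos hx).ne'
  have hpow : HasDerivAt (fun x : ℝ => (1 - x ^ 2) ^ 2) (2 * (1 - x ^ 2) * (-(2 * x))) x := by
    simpa using ((hasDerivAt_pow 2 x).const_sub 1).fun_pow 2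
  refine ((((hasDerivAt_inv hx0).fun_mul hpow).fun_mul
    (((ha.hasDerivAt_y x).fun_add (hb.hasDerivAt_y x)).div_const 6).exp).fun_mul
      ((ha.hasDerivAt_deriv_y x).fun_sub (hb.hasDerivAt_deriv_y x))).congr_deriv ?_
  rw [ha.eq_y x hx, hb.eq_y x hx]
  field_simp
  ring

theorem w_nonneg (h : ReducedBergerSolution G y w) (hG : ∀ t, 0 ≤ G t → 0 ≤ t) (h0 : 0 ≤ w 0) :
    ∀ x ∈ Icc 0 1, 0 ≤ w x := by
  have hw : Continuous w := h.contDiff_w.continuous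
  obtain ⟨c, hc, hmin⟩ := isCompact_Icc.exists_isMinOn (nonempty_Icc.2 zero_le_one) hw.continuousOn
  suffices 0 ≤ w c from fun x hx => this.trans (hmin hx)
  rcases hc.1.eq_or_lt with rfl | hc0
  · exact h0
  rcases hc.2.eq_or_lt with rfl | hc1
  · exact h.w_one.ge
  have hcmin : IsLocalMin w c := hmin.isLocalMin (Icc_mem_nhds hc0 hc1)
  have hconvex := deriv_deriv_nonneg_of_isLocalMin hw.continuousAt hcmin
  rw [h.eq_w c ⟨hc0, hc1⟩, hcmin.deriv_eq_zero] at hconvex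
  have := one_sub_sq_pos ⟨hc0, hc1⟩
  have hcoeff : 0 < 32 * ((1 - c ^ 2)⁻¹) ^ 2 * exp (-(y c) / 3) := by positivity
  exact hG _ (nonneg_of_mul_nonneg_right (by simpa using hconvex) hcoeff)

theorem deriv_w_nonpos (h : ReducedBergerSolution G y w) (hG : ∀ t, 0 ≤ G t ↔ 0 ≤ t)
    (h0 : 0 ≤ w 0) : ∀ x ∈ Ioo 0 1, deriv w x ≤ 0 := by
  intro x hx
  have hcont : ContinuousOn (bergerFlux y w) (Icc x 1) := by
    have := h.contDiff_y.continuous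
    have := h.contDiff_deriv_w.continuous
    have : ∀ t ∈ Icc x 1, t ^ 2 ≠ 0 := fun t ht => pow_ne_zero 2 (hx.1.trans_le ht.1).ne'
    unfold bergerFlux
    fun_prop (disch := assumption)
  have hmono : MonotoneOn (bergerFlux y w) (Icc x 1) := by
    refine monotoneOn_of_hasDerivWithinAt_nonneg (convex_Icc x 1) hcont
      (f' := fun x => 32 * (x ^ 2)⁻¹ * (1 - x ^ 2) * (exp (y x / 6) * G (w x))) ?_ ?_ <;>
      rw [interior_Icc] <;> intro t ht <;> have ht01 : t ∈ Ioo 0 1 := ⟨hx.1.trans ht.1, ht.2⟩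
    · exact (h.hasDerivAt_flux ht01).hasDerivWithinAt
    · have := one_sub_sq_pos ht01
      have := (hG _).2 (h.w_nonneg (fun t => (hG t).1) h0 t (Ioo_subset_Icc_self ht01))
      positivity
  have hflux : bergerFlux y w x ≤ 0 := by
    simpa [bergerFlux] using hmono (left_mem_Icc.2 hx.2.le) (right_mem_Icc.2 hx.2.le) hx.2.le
  have := one_sub_sq_pos hx
  have := hx.1
  exact nonpos_of_mul_nonpos_right hflux (by positivity)

theorem w_mem_Icc (h : ReducedBergerSolution G y w) (hG : ∀ t, 0 ≤ G t ↔ 0 ≤ t) (h0 : 0 ≤ w 0) :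
    ∀ x ∈ Icc 0 1, w x ∈ Icc 0 (w 0) := by
  have hanti : AntitoneOn w (Icc 0 1) := by
    refine antitoneOn_of_hasDerivWithinAt_nonpos (convex_Icc 0 1)
      h.contDiff_w.continuous.continuousOn
      (fun x _ => (h.hasDerivAt_w x).hasDerivWithinAt) ?_
    rw [interior_Icc]
    exact h.deriv_w_nonpos hG h0
  exact fun x hx => ⟨h.w_nonneg (fun t => (hG t).1) h0 x hx,
    hanti (left_mem_Icc.2 zero_le_one) hx hx.1⟩

theorem deriv_deriv_w_zero (h : ReducedBergerSolution G y w) (hG : Continuous G) :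
    deriv (deriv w) 0 = -(32 * exp (-(y 0) / 3) * G (w 0)) := by
  have := h.contDiff_y.continuous
  have := h.contDiff_w.continuous
  have := h.contDiff_y.continuous_deriv one_le_two
  have := h.contDiff_deriv_w.continuous
  have hinv : ContinuousAt (fun x : ℝ => (1 - x ^ 2)⁻¹) 0 :=
    ContinuousAt.inv₀ (by fun_prop) (by norm_num)
  have hlimit := deriv_zero_of_singular_equation (f := deriv w)
    (p := fun x => 2 * (1 + 2 * x ^ 2) * (1 - x ^ 2)⁻¹)
    (r := fun x => -((1 / 2) * deriv y x * deriv w x)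
      + 32 * ((1 - x ^ 2)⁻¹) ^ 2 * exp (-(y x) / 3) * G (w x))
    (h.contDiff_deriv_w.differentiable two_ne_zero)
    (h.contDiff_deriv_w.continuous_deriv one_le_two).continuousAt (by fun_prop) (by fun_prop)
    h.deriv_w_zero (by
      filter_upwards [Ioo_mem_nhdsGT one_pos] with x hx
      rw [h.eq_w x hx]
      ring)
  simp only [h.deriv_w_zero] at hlimit
  norm_num at hlimit
  linarith

theorem tendsto_deriv_w_sub_div_sq (ha : ReducedBergerSolution G ya wa)
    (hb : ReducedBergerSolution G yb wb) (hG : Continuous G) (hy : ya 0 = yb 0)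
    (hw : wa 0 = wb 0) :
    Tendsto (fun x => (deriv wa x - deriv wb x) / x ^ 2) (𝓝[>] 0)
      (𝓝 ((deriv (deriv (deriv wa)) 0 - deriv (deriv (deriv wb)) 0) / 2)) :=
  tendsto_div_sq_of_hasDerivAt
    (.of_forall fun x => (ha.hasDerivAt_deriv_w x).fun_sub (hb.hasDerivAt_deriv_w x))
    ((ha.hasDerivAt_deriv_deriv_w 0).fun_sub (hb.hasDerivAt_deriv_deriv_w 0))
    (by rw [ha.deriv_w_zero, hb.deriv_w_zero, sub_self])
    (by rw [ha.deriv_deriv_w_zero hG, hb.deriv_deriv_w_zero hG, hy, hw, sub_self])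

theorem tendsto_flux_sub (ha : ReducedBergerSolution G ya wa)
    (hb : ReducedBergerSolution G yb wb) (hG : Continuous G) (hy : ya 0 = yb 0)
    (hw : wa 0 = wb 0) :
    Tendsto (fun x => bergerFlux ya wa x - bergerFlux yb wb x) (𝓝[>] 0)
      (𝓝 (exp (ya 0 / 2)
        * ((deriv (deriv (deriv wa)) 0 - deriv (deriv (deriv wb)) 0) / 2))) := by
  have := ha.contDiff_y.continuous
  have hweight : Tendsto (fun x : ℝ => (1 - x ^ 2) ^ 3) (𝓝[>] 0) (𝓝 1) := by
    simpa using ((by fun_prop : Continuous fun x : ℝ => (1 - x ^ 2) ^ 3).tendsto 0).mono_left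
      nhdsWithin_le_nhds
  have hexp : Tendsto (fun x => exp (ya x / 2)) (𝓝[>] 0) (𝓝 (exp (ya 0 / 2))) :=
    ((by fun_prop : Continuous fun x => exp (ya x / 2)).tendsto 0).mono_left nhdsWithin_le_nhds
  have hexp_sub : Tendsto (fun x => (exp (ya x / 2) - exp (yb x / 2)) / x) (𝓝[>] 0) (𝓝 0) := by
    refine tendsto_div_self_of_hasDerivAt ?_ (by rw [hy, sub_self])
    simpa [ha.deriv_y_zero, hb.deriv_y_zero] using
      ((ha.hasDerivAt_y 0).div_const 2).exp.fun_sub ((hb.hasDerivAt_y 0).div_const 2).exp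
  have hwb := tendsto_div_self_of_hasDerivAt (hb.hasDerivAt_deriv_w 0) hb.deriv_w_zero
  simp only [bergerFlux_sub]
  simpa using hweight.mul
    ((hexp.mul (tendsto_deriv_w_sub_div_sq ha hb hG hy hw)).add (hexp_sub.mul hwb))

theorem tendsto_diffFlux (ha : ReducedBergerSolution G ya wa) (hb : ReducedBergerSolution G yb wb)
    (hy'' : deriv (deriv ya) 0 = deriv (deriv yb) 0) :
    Tendsto (bergerDiffFlux ya yb) (𝓝[>] 0) (𝓝 0) := by
  have := ha.contDiff_y.continuous
  have := hb.contDiff_y.continuous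
  have hquot : Tendsto (fun x => (deriv ya x - deriv yb x) / x) (𝓝[>] 0) (𝓝 0) :=
    tendsto_div_self_of_hasDerivAt
      (by simpa [hy''] using (ha.hasDerivAt_deriv_y 0).fun_sub (hb.hasDerivAt_deriv_y 0))
      (by rw [ha.deriv_y_zero, hb.deriv_y_zero, sub_self])
  have hweight : Continuous fun x => (1 - x ^ 2) ^ 2 * exp ((ya x + yb x) / 6) := by fun_prop
  have hlim := ((hweight.tendsto 0).mono_left nhdsWithin_le_nhds).mul hquot
  rw [mul_zero] at hlim
  refine hlim.congr fun x => ?_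
  unfold bergerDiffFlux
  ring

end ReducedBergerSolution

/-! ### Comparison of two solutions -/

namespace ReducedBergerSolution

variable {G ya wa yb wb : ℝ → ℝ} {x : ℝ}

theorem deriv_y_le_of_deriv_w_le (ha : ReducedBergerSolution G ya wa)
    (hb : ReducedBergerSolution G yb wb) (hy'' : deriv (deriv ya) 0 = deriv (deriv yb) 0)
    (hG : ∀ t, 0 ≤ G t ↔ 0 ≤ t) (hwa : 0 ≤ wa 0) (hwb : 0 ≤ wb 0) (hx : x ∈ Ioo 0 1)
    (hle : ∀ t ∈ Ioo 0 x, deriv wb t ≤ deriv wa t) : deriv yb x ≤ deriv ya x := by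
  have hsub : Ioc 0 x ⊆ Ioo 0 1 := Ioc_subset_Ioo_right hx.2
  have hflux : 0 ≤ bergerDiffFlux ya yb x := by
    refine le_of_tendsto_nhdsGT_of_hasDerivAt_nonneg hx.1
      (fun t ht => hasDerivAt_diffFlux ha hb (hsub ht)) (fun t ht => ?_)
      (tendsto_diffFlux ha hb hy'')
    have ht1 := hsub (Ioo_subset_Ioc_self ht)
    have hsum : deriv wa t + deriv wb t ≤ 0 :=
      add_nonpos (ha.deriv_w_nonpos hG hwa t ht1) (hb.deriv_w_nonpos hG hwb t ht1)
    have hweight : 0 ≤ (1 / 3) * t⁻¹ * (1 - t ^ 2) ^ 2 * exp ((ya t + yb t) / 6) := by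
      have := ht.1
      positivity
    linarith [mul_nonneg (mul_nonneg hweight (neg_nonneg.2 hsum)) (sub_nonneg.2 (hle t ht))]
  have := one_sub_sq_pos hx
  have := hx.1
  exact sub_nonneg.1 (nonneg_of_mul_nonneg_right hflux (by positivity))

theorem y_le_of_deriv_w_le (ha : ReducedBergerSolution G ya wa)
    (hb : ReducedBergerSolution G yb wb) (hy : ya 0 = yb 0)
    (hy'' : deriv (deriv ya) 0 = deriv (deriv yb) 0) (hG : ∀ t, 0 ≤ G t ↔ 0 ≤ t)
    (hwa : 0 ≤ wa 0) (hwb : 0 ≤ wb 0) (hx : x ∈ Ioo 0 1)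
    (hle : ∀ t ∈ Ioo 0 x, deriv wb t ≤ deriv wa t) : yb x ≤ ya x :=
  le_of_forall_hasDerivAt_le hx.1 hb.hasDerivAt_y ha.hasDerivAt_y hy.symm fun _ ht =>
    deriv_y_le_of_deriv_w_le ha hb hy'' hG hwa hwb ⟨ht.1, ht.2.trans hx.2⟩
      fun s hs => hle s ⟨hs.1, hs.2.trans ht.2⟩

theorem deriv_flux_le_of_le (ha : ReducedBergerSolution G ya wa)
    (hb : ReducedBergerSolution G yb wb) (hw : wa 0 = wb 0) (hG : ∀ t, 0 ≤ G t ↔ 0 ≤ t)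
    (hGmono : MonotoneOn G (Icc 0 (wa 0))) (h0 : 0 ≤ wa 0) (hx : x ∈ Ioo 0 1)
    (hyx : yb x ≤ ya x) (hwx : wb x ≤ wa x) :
    deriv (bergerFlux yb wb) x ≤ deriv (bergerFlux ya wa) x := by
  have hwa := ha.w_mem_Icc hG h0 x (Ioo_subset_Icc_self hx)
  have hwb := hb.w_mem_Icc hG (hw ▸ h0) x (Ioo_subset_Icc_self hx)
  have hGle : G (wb x) ≤ G (wa x) := hGmono (hw ▸ hwb) hwa hwx
  have hGb : 0 ≤ G (wb x) := (hG _).2 hwb.1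
  rw [(ha.hasDerivAt_flux hx).deriv, (hb.hasDerivAt_flux hx).deriv]
  have := one_sub_sq_pos hx
  gcongr

theorem flux_sub_ge_of_deriv_w_le (ha : ReducedBergerSolution G ya wa)
    (hb : ReducedBergerSolution G yb wb) (hy : ya 0 = yb 0) (hw : wa 0 = wb 0)
    (hy'' : deriv (deriv ya) 0 = deriv (deriv yb) 0) (hGc : Continuous G)
    (hG : ∀ t, 0 ≤ G t ↔ 0 ≤ t) (hGmono : MonotoneOn G (Icc 0 (wa 0))) (h0 : 0 ≤ wa 0)
    (hx : x ∈ Ioo 0 1) (hle : ∀ t ∈ Ioo 0 x, deriv wb t ≤ deriv wa t) :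
    exp (ya 0 / 2) * ((deriv (deriv (deriv wa)) 0 - deriv (deriv (deriv wb)) 0) / 2)
      ≤ bergerFlux ya wa x - bergerFlux yb wb x := by
  have hsub : Ioc 0 x ⊆ Ioo 0 1 := Ioc_subset_Ioo_right hx.2
  refine le_of_tendsto_nhdsGT_of_hasDerivAt_nonneg hx.1
    (f := fun x => bergerFlux ya wa x - bergerFlux yb wb x)
    (fun t ht => (ha.hasDerivAt_flux (hsub ht)).differentiableAt.hasDerivAt.fun_sub
      (hb.hasDerivAt_flux (hsub ht)).differentiableAt.hasDerivAt)
    (fun t ht => ?_) (tendsto_flux_sub ha hb hGc hy hw)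
  have ht1 := hsub (Ioo_subset_Ioc_self ht)
  have hlet : ∀ s ∈ Ioo 0 t, deriv wb s ≤ deriv wa s := fun s hs =>
    hle s ⟨hs.1, hs.2.trans ht.2⟩
  have hyt : yb t ≤ ya t := y_le_of_deriv_w_le ha hb hy hy'' hG h0 (hw ▸ h0) ht1 hlet
  have hwt : wb t ≤ wa t :=
    le_of_forall_hasDerivAt_le ht.1 hb.hasDerivAt_w ha.hasDerivAt_w hw.symm hlet
  exact sub_nonneg.2 (deriv_flux_le_of_le ha hb hw hG hGmono h0 ht1 hyt hwt)

theorem deriv_w_lt_of_forall_le (ha : ReducedBergerSolution G ya wa)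
    (hb : ReducedBergerSolution G yb wb) (hy : ya 0 = yb 0) (hw : wa 0 = wb 0)
    (hy'' : deriv (deriv ya) 0 = deriv (deriv yb) 0) (hGc : Continuous G)
    (hG : ∀ t, 0 ≤ G t ↔ 0 ≤ t) (hGmono : MonotoneOn G (Icc 0 (wa 0))) (h0 : 0 ≤ wa 0)
    (hw''' : deriv (deriv (deriv wb)) 0 < deriv (deriv (deriv wa)) 0) (hx : x ∈ Ioo 0 1)
    (hle : ∀ t ∈ Ioo 0 x, deriv wb t ≤ deriv wa t) : deriv wb x < deriv wa x := by
  have hflux : bergerFlux yb wb x < bergerFlux ya wa x :=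
    sub_pos.1 <| (mul_pos (exp_pos _) (half_pos (sub_pos.2 hw'''))).trans_le
      (flux_sub_ge_of_deriv_w_le ha hb hy hw hy'' hGc hG hGmono h0 hx hle)
  have hyx : yb x ≤ ya x := y_le_of_deriv_w_le ha hb hy hy'' hG h0 (hw ▸ h0) hx hle
  have hwa : deriv wa x ≤ 0 := ha.deriv_w_nonpos hG h0 x hx
  have hweight : 0 < (x ^ 2)⁻¹ * (1 - x ^ 2) ^ 3 := by
    have := one_sub_sq_pos hx
    have := hx.1
    positivity
  refine lt_of_mul_lt_mul_left ?_ (exp_pos (yb x / 2)).le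
  calc exp (yb x / 2) * deriv wb x < exp (ya x / 2) * deriv wa x := by
        refine lt_of_mul_lt_mul_left ?_ hweight.le
        simpa only [bergerFlux, mul_assoc] using hflux
    _ ≤ exp (yb x / 2) * deriv wa x :=
        mul_le_mul_of_nonpos_right (exp_le_exp.2 (by linarith)) hwa

theorem third_deriv_w_le (ha : ReducedBergerSolution G ya wa)
    (hb : ReducedBergerSolution G yb wb) (hy : ya 0 = yb 0) (hw : wa 0 = wb 0)
    (hy'' : deriv (deriv ya) 0 = deriv (deriv yb) 0) (hGc : Continuous G)
    (hG : ∀ t, 0 ≤ G t ↔ 0 ≤ t) (hGmono : MonotoneOn G (Icc 0 (wa 0))) (h0 : 0 ≤ wa 0) :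
    deriv (deriv (deriv wa)) 0 ≤ deriv (deriv (deriv wb)) 0 := by
  by_contra! hw'''
  have hnear : ∀ᶠ x in 𝓝[>] 0, deriv wb x < deriv wa x := by
    filter_upwards [self_mem_nhdsWithin, (tendsto_deriv_w_sub_div_sq ha hb hGc hy hw).eventually
      (lt_mem_nhds (half_pos (sub_pos.2 hw''')))] with x hx hquot
    exact sub_pos.1 ((div_pos_iff_of_pos_right (pow_pos hx 2)).1 hquot)
  have hlt : ∀ x ∈ Ioo 0 1, deriv wb x < deriv wa x := by
    refine forall_mem_Ioo_of_eventually_nhdsGT hnear (fun x _ hx => ?_) fun c hc hlt =>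
      deriv_w_lt_of_forall_le ha hb hy hw hy'' hGc hG hGmono h0 hw''' hc fun t ht => (hlt t ht).le
    exact (hb.contDiff_deriv_w.continuous.continuousAt.eventually_lt
      ha.contDiff_deriv_w.continuous.continuousAt hx).filter_mono nhdsWithin_le_nhds
  have hmono : StrictMonoOn (fun x => wa x - wb x) (Icc 0 1) := by
    refine strictMonoOn_of_hasDerivWithinAt_pos (convex_Icc 0 1)
      (ha.contDiff_w.continuous.sub hb.contDiff_w.continuous).continuousOn
      (fun x _ => ((ha.hasDerivAt_w x).fun_sub (hb.hasDerivAt_w x)).hasDerivWithinAt) ?_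
    rw [interior_Icc]
    exact fun x hx => sub_pos.2 (hlt x hx)
  simpa [hw, ha.w_one, hb.w_one] using
    hmono (left_mem_Icc.2 zero_le_one) (right_mem_Icc.2 zero_le_one) one_pos

end ReducedBergerSolution

/-! ### Coincidence near the singular endpoint -/

theorem isBigO_comp_sub_comp {α E F : Type*} [NormedAddCommGroup E] [NormedSpace ℝ E]
    [NormedAddCommGroup F] [NormedSpace ℝ F] {f : E → F} {p q : α → E} {l : Filter α} {c : E}
    (hf : ContDiffAt ℝ 1 f c) (hp : Tendsto p l (𝓝 c)) (hq : Tendsto q l (𝓝 c)) :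
    (fun x => f (p x) - f (q x)) =O[l] fun x => p x - q x :=
  (hf.hasStrictFDerivAt one_ne_zero).isBigO_sub.comp_tendsto (hp.prodMk_nhds hq)

theorem isBigO_mul_of_tendsto {α : Type*} {l : Filter α} {f g : α → ℝ} {L : ℝ}
    (hf : Tendsto f l (𝓝 L)) : (fun x => f x * g x) =O[l] g := by
  simpa using (hf.isBigO_one ℝ).mul (isBigO_refl g l)

namespace ReducedBergerSolution

variable {G y w ya wa yb wb : ℝ → ℝ}

theorem tendsto_y (h : ReducedBergerSolution G y w) : Tendsto y (𝓝[>] 0) (𝓝 (y 0)) :=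
  (h.contDiff_y.continuous.tendsto 0).mono_left nhdsWithin_le_nhds

theorem tendsto_w (h : ReducedBergerSolution G y w) : Tendsto w (𝓝[>] 0) (𝓝 (w 0)) :=
  (h.contDiff_w.continuous.tendsto 0).mono_left nhdsWithin_le_nhds

theorem isBigO_deriv_w (h : ReducedBergerSolution G y w) : deriv w =O[𝓝[>] 0] fun x => x := by
  simpa [h.deriv_w_zero] using (h.hasDerivAt_deriv_w 0).isBigO_sub.mono nhdsWithin_le_nhds

theorem isBigO_deriv_y_sub (ha : ReducedBergerSolution G ya wa)
    (hb : ReducedBergerSolution G yb wb) :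
    (fun x => deriv ya x - deriv yb x) =O[𝓝[>] 0] fun x => x * bergerDiffFlux ya yb x := by
  have := ha.contDiff_y.continuous
  have := hb.contDiff_y.continuous
  have hweight : ContinuousAt (fun x => ((1 - x ^ 2) ^ 2 * exp ((ya x + yb x) / 6))⁻¹) 0 :=
    ContinuousAt.inv₀ (by fun_prop) (by simp)
  refine (isBigO_mul_of_tendsto (hweight.tendsto.mono_left nhdsWithin_le_nhds)).congr' ?_ .rfl
  filter_upwards [Ioo_mem_nhdsGT one_pos] with x hx
  have := (one_sub_sq_pos hx).ne'
  have := hx.1.ne'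
  unfold bergerDiffFlux
  field_simp

theorem isBigO_deriv_w_sub (ha : ReducedBergerSolution G ya wa)
    (hb : ReducedBergerSolution G yb wb) (hy : ya 0 = yb 0) :
    (fun x => deriv wa x - deriv wb x) =O[𝓝[>] 0] fun x =>
      (x ^ 2 * (bergerFlux ya wa x - bergerFlux yb wb x), x * (ya x - yb x)) := by
  have := ha.contDiff_y.continuous
  have hweight : ContinuousAt (fun x => ((1 - x ^ 2) ^ 3 * exp (ya x / 2))⁻¹) 0 :=
    ContinuousAt.inv₀ (by fun_prop) (by simp)
  have hexp : ContinuousAt (fun x => (exp (ya x / 2))⁻¹) 0 := by fun_prop (disch := simp)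
  have hexp_sub : (fun x => exp (ya x / 2) - exp (yb x / 2)) =O[𝓝[>] 0] fun x => ya x - yb x :=
    isBigO_comp_sub_comp (f := fun t => exp (t / 2)) (by fun_prop) ha.tendsto_y (hy ▸ hb.tendsto_y)
  have hfluxTerm := (isBigO_mul_of_tendsto (l := 𝓝[>] 0)
    (hweight.tendsto.mono_left nhdsWithin_le_nhds)
    (g := fun x => x ^ 2 * (bergerFlux ya wa x - bergerFlux yb wb x))).prod_rightl
      fun x => x * (ya x - yb x)
  have hyTerm := ((isBigO_mul_of_tendsto (l := 𝓝[>] 0)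
    (hexp.tendsto.mono_left nhdsWithin_le_nhds)).trans (hb.isBigO_deriv_w.mul hexp_sub)).prod_rightr
      fun x => x ^ 2 * (bergerFlux ya wa x - bergerFlux yb wb x)
  refine (hfluxTerm.sub hyTerm).congr' ?_ .rfl
  filter_upwards [Ioo_mem_nhdsGT one_pos] with x hx
  have := (one_sub_sq_pos hx).ne'
  have := hx.1.ne'
  unfold bergerFlux
  field_simp
  ring

theorem isBigO_deriv_diffFlux (ha : ReducedBergerSolution G ya wa)
    (hb : ReducedBergerSolution G yb wb) :
    deriv (bergerDiffFlux ya yb) =O[𝓝[>] 0] fun x => deriv wa x - deriv wb x := by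
  have := ha.contDiff_y.continuous
  have := hb.contDiff_y.continuous
  have hweight : Continuous fun x => -(1 / 3) * (1 - x ^ 2) ^ 2 * exp ((ya x + yb x) / 6) := by
    fun_prop
  have hquot := (tendsto_div_self_of_hasDerivAt (ha.hasDerivAt_deriv_w 0) ha.deriv_w_zero).add
    (tendsto_div_self_of_hasDerivAt (hb.hasDerivAt_deriv_w 0) hb.deriv_w_zero)
  refine (isBigO_mul_of_tendsto
    (((hweight.tendsto 0).mono_left nhdsWithin_le_nhds).mul hquot)).congr' ?_ .rfl
  filter_upwards [Ioo_mem_nhdsGT one_pos] with x hx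
  rw [(hasDerivAt_diffFlux ha hb hx).deriv]
  ring

theorem isBigO_deriv_flux_sub (ha : ReducedBergerSolution G ya wa)
    (hb : ReducedBergerSolution G yb wb) (hy : ya 0 = yb 0) (hw : wa 0 = wb 0)
    (hG : ContDiff ℝ 1 G) :
    (fun x => x ^ 2 * (deriv (bergerFlux ya wa) x - deriv (bergerFlux yb wb) x)) =O[𝓝[>] 0]
      fun x => (ya x - yb x, wa x - wb x) := by
  have hforce := isBigO_comp_sub_comp (f := fun p : ℝ × ℝ => exp (p.1 / 6) * G p.2)
    (c := (ya 0, wa 0)) (by fun_prop) (ha.tendsto_y.prodMk_nhds ha.tendsto_w)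
    (by rw [hy, hw]; exact hb.tendsto_y.prodMk_nhds hb.tendsto_w)
  have hweight : Continuous fun x : ℝ => 32 * (1 - x ^ 2) := by fun_prop
  refine ((isBigO_mul_of_tendsto
    ((hweight.tendsto 0).mono_left nhdsWithin_le_nhds)).trans hforce).congr' ?_ .rfl
  filter_upwards [Ioo_mem_nhdsGT one_pos] with x hx
  have := hx.1.ne'
  rw [(ha.hasDerivAt_flux hx).deriv, (hb.hasDerivAt_flux hx).deriv]
  field_simp

theorem eventually_eq_of_third_deriv_w_eq (ha : ReducedBergerSolution G ya wa)
    (hb : ReducedBergerSolution G yb wb) (hy : ya 0 = yb 0) (hw : wa 0 = wb 0)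
    (hy'' : deriv (deriv ya) 0 = deriv (deriv yb) 0)
    (hw''' : deriv (deriv (deriv wa)) 0 = deriv (deriv (deriv wb)) 0) (hG : ContDiff ℝ 1 G) :
    ∀ᶠ x in 𝓝[>] 0, ya x - yb x = 0 ∧ wa x - wb x = 0 := by
  have hdU : ∀ᶠ x in 𝓝[>] 0,
      HasDerivAt (bergerDiffFlux ya yb) (deriv (bergerDiffFlux ya yb) x) x := by
    filter_upwards [Ioo_mem_nhdsGT one_pos] with x hx
    exact (hasDerivAt_diffFlux ha hb hx).differentiableAt.hasDerivAt
  have hdW : ∀ᶠ x in 𝓝[>] 0, HasDerivAt (fun x => bergerFlux ya wa x - bergerFlux yb wb x)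
      (deriv (bergerFlux ya wa) x - deriv (bergerFlux yb wb) x) x := by
    filter_upwards [Ioo_mem_nhdsGT one_pos] with x hx
    exact (ha.hasDerivAt_flux hx).differentiableAt.hasDerivAt.fun_sub
      (hb.hasDerivAt_flux hx).differentiableAt.hasDerivAt
  exact eventually_eq_zero_of_singular_system
    (.of_forall fun x => (ha.hasDerivAt_y x).fun_sub (hb.hasDerivAt_y x))
    (.of_forall fun x => (ha.hasDerivAt_w x).fun_sub (hb.hasDerivAt_w x)) hdU hdW
    (by simpa [hy] using ha.tendsto_y.sub hb.tendsto_y)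
    (by simpa [hw] using ha.tendsto_w.sub hb.tendsto_w)
    (tendsto_diffFlux ha hb hy'')
    (by simpa [hw'''] using tendsto_flux_sub ha hb hG.continuous hy hw)
    (isBigO_deriv_y_sub ha hb) (isBigO_deriv_w_sub ha hb hy) (isBigO_deriv_diffFlux ha hb)
    (isBigO_deriv_flux_sub ha hb hy hw hG)

theorem eventuallyEq_of_monotoneOn (ha : ReducedBergerSolution G ya wa)
    (hb : ReducedBergerSolution G yb wb) (hy : ya 0 = yb 0) (hw : wa 0 = wb 0)
    (hy'' : deriv (deriv ya) 0 = deriv (deriv yb) 0) (hGc : ContDiff ℝ 1 G)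
    (hG : ∀ t, 0 ≤ G t ↔ 0 ≤ t) (hGmono : MonotoneOn G (Icc 0 (wa 0))) (h0 : 0 ≤ wa 0) :
    ya =ᶠ[𝓝[>] 0] yb ∧ wa =ᶠ[𝓝[>] 0] wb := by
  have hle := third_deriv_w_le ha hb hy hw hy'' hGc.continuous hG hGmono h0
  have hge := third_deriv_w_le hb ha hy.symm hw.symm hy''.symm hGc.continuous hG
    (hw ▸ hGmono) (hw ▸ h0)
  have heq := eventually_eq_of_third_deriv_w_eq ha hb hy hw hy'' (le_antisymm hle hge) hGc
  exact ⟨heq.mono fun x hx => sub_eq_zero.1 hx.1, heq.mono fun x hx => sub_eq_zero.1 hx.2⟩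

end ReducedBergerSolution

/-! ### The Berger system -/

/-- The zeroth order nonlinearity `phi^{-1/3} - phi^{-4/3}` of (E3) as a function of
`u = log phi`. -/
noncomputable def bergerForce (u : ℝ) : ℝ :=
  exp (-u / 3) - exp (-(4 * u) / 3)

theorem contDiff_bergerForce {n : WithTop ℕ∞} : ContDiff ℝ n bergerForce := by
  unfold bergerForce
  fun_prop

theorem bergerForce_nonneg_iff {u : ℝ} : 0 ≤ bergerForce u ↔ 0 ≤ u := by
  rw [bergerForce, sub_nonneg, exp_le_exp]
  constructor <;> intro h <;> linarith

theorem bergerForce_nonpos_iff {u : ℝ} : bergerForce u ≤ 0 ↔ u ≤ 0 := by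
  rw [bergerForce, sub_nonpos, exp_le_exp]
  constructor <;> intro h <;> linarith

theorem antitoneOn_sub_pow_four :
    AntitoneOn (fun s : ℝ => s - s ^ 4) {s | 0 ≤ s ∧ 1 ≤ 4 * s ^ 3} := by
  rintro r ⟨hr0, hr⟩ s - hrs
  have hs0 : 0 ≤ s + r := by linarith
  have hsum : 4 * r ^ 3 ≤ (s + r) * (s ^ 2 + r ^ 2) := calc
    4 * r ^ 3 = (r + r) * (r ^ 2 + r ^ 2) := by ring
    _ ≤ (s + r) * (s ^ 2 + r ^ 2) := by gcongr
  have := mul_nonneg (sub_nonneg.2 hrs) (sub_nonneg.2 (hr.trans hsum))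
  linear_combination this

theorem monotoneOn_bergerForce : MonotoneOn bergerForce {u | exp u ≤ 4} := by
  have hforce (u : ℝ) : bergerForce u = exp (-u / 3) - exp (-u / 3) ^ 4 := by
    rw [bergerForce, ← exp_nat_mul]
    ring_nf
  have hmem (u : ℝ) (hu : exp u ≤ 4) : exp (-u / 3) ∈ {s : ℝ | 0 ≤ s ∧ 1 ≤ 4 * s ^ 3} := by
    have hcube : exp (-u / 3) ^ 3 = (exp u)⁻¹ := by
      rw [← exp_nat_mul, ← exp_neg]
      ring_nf
    refine ⟨(exp_pos _).le, ?_⟩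
    rwa [hcube, ← div_eq_mul_inv, one_le_div (exp_pos u)]
  intro a ha b hb hab
  rw [hforce, hforce]
  exact antitoneOn_sub_pow_four (hmem b hb) (hmem a ha) (exp_le_exp.2 (by linarith))

namespace BergerBVPSolution

variable {y1 y2 y11 y12 y21 y22 : ℝ → ℝ}

theorem reduced (h : BergerBVPSolution y1 y2) : ReducedBergerSolution bergerForce y1 y2 where
  contDiff_y := contDiff_infty.1 h.smooth1 2
  contDiff_w := contDiff_infty.1 h.smooth2 3
  eq_y x hx := by
    have hE1 := h.eqE1 x hx
    unfold BergerE1 at hE1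
    linear_combination hE1
  eq_w x hx := by
    have hE3 := h.eqE3 x hx
    have hphi : exp (-(4 * y2 x) / 3) = exp (-y2 x / 3) * exp (-y2 x) := by
      rw [← exp_add]
      ring_nf
    have hthird (u : ℝ) : u * (-1 / 3) = -u / 3 := by ring
    unfold BergerE3 at hE3
    rw [← exp_mul, ← exp_mul, ← exp_neg, hthird, hthird] at hE3
    rw [bergerForce, hphi]
    linear_combination hE3
  deriv_y_zero := h.der1_0
  deriv_w_zero := h.der2_0
  w_one := exp_eq_one_iff _ |>.1 h.bdryPhi

theorem deriv_deriv_y1_zero (h : BergerBVPSolution y1 y2) :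
    deriv (deriv y1) 0 =
      2 * (6 - 8 * exp (y1 0) ^ (-(1 : ℝ) / 3) * exp (y2 0) ^ (-(1 : ℝ) / 3)
        + 2 * exp (y1 0) ^ (-(1 : ℝ) / 3) * exp (y2 0) ^ (-(4 : ℝ) / 3)) := by
  have hy1 : ContDiff ℝ 2 y1 := h.reduced.contDiff_y
  have := hy1.continuous
  have := h.smooth2.continuous
  have := hy1.continuous_deriv one_le_two
  have hinv : ContinuousAt (fun x : ℝ => (1 - x ^ 2)⁻¹) 0 :=
    ContinuousAt.inv₀ (by fun_prop) (by simp)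
  have hr : ContinuousAt (fun x => -(1 / 2) * deriv y1 x ^ 2 - 8 * ((1 - x ^ 2)⁻¹) ^ 2 *
      (6 - 8 * exp (y1 x) ^ (-(1 : ℝ) / 3) * exp (y2 x) ^ (-(1 : ℝ) / 3)
        + 2 * exp (y1 x) ^ (-(1 : ℝ) / 3) * exp (y2 x) ^ (-(4 : ℝ) / 3))) 0 := by
    simp only [← exp_mul]
    fun_prop
  have hjet := deriv_zero_of_singular_equation (p := fun x => (5 + 7 * x ^ 2) * (1 - x ^ 2)⁻¹)
    hy1.differentiable_deriv_two
    (hy1.deriv' (n := 1)).continuous_deriv_one.continuousAt (by fun_prop) hr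
    h.der1_0 (by
      filter_upwards [Ioo_mem_nhdsGT one_pos] with x hx
      have hE2 := h.eqE2 x hx
      unfold BergerE2 at hE2
      linear_combination hE2)
  simp only [h.der1_0] at hjet
  linear_combination (-1 / 4) * hjet

theorem eventuallyEq_nhdsGT (h₁ : BergerBVPSolution y11 y12) (h₂ : BergerBVPSolution y21 y22)
    (hphi : y12 0 = y22 0) (hK : y11 0 = y21 0) (hle : exp (y12 0) ≤ 4) :
    y11 =ᶠ[𝓝[>] 0] y21 ∧ y12 =ᶠ[𝓝[>] 0] y22 := by
  have hjet : deriv (deriv y11) 0 = deriv (deriv y21) 0 := by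
    rw [h₁.deriv_deriv_y1_zero, h₂.deriv_deriv_y1_zero, hphi, hK]
  rcases le_total 0 (y12 0) with h0 | h0
  · exact ReducedBergerSolution.eventuallyEq_of_monotoneOn h₁.reduced h₂.reduced hK hphi hjet
      contDiff_bergerForce (fun _ => bergerForce_nonneg_iff)
      (monotoneOn_bergerForce.mono fun u hu => (exp_le_exp.2 hu.2).trans hle) h0
  · have hmem (u : ℝ) (hu : 0 ≤ u) : exp (-u) ≤ 4 := by
      linarith [exp_le_one_iff.2 (neg_nonpos.2 hu)]
    obtain ⟨hy, hw⟩ := ReducedBergerSolution.eventuallyEq_of_monotoneOn h₁.reduced.neg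
      h₂.reduced.neg hK (congrArg Neg.neg hphi) hjet (contDiff_bergerForce.comp contDiff_neg).neg
      (fun t => by rw [neg_nonneg, bergerForce_nonpos_iff, neg_nonpos])
      (fun a ha b hb hab => neg_le_neg
        (monotoneOn_bergerForce (hmem b hb.1) (hmem a ha.1) (neg_le_neg hab)))
      (neg_nonneg.2 h0)
    exact ⟨hy, hw.mono fun x hx => neg_injective hx⟩

end BergerBVPSolution

theorem berger_unique_given_K0_general (y11 y12 y21 y22 : ℝ → ℝ)
    (hsol1 : BergerBVPSolution y11 y12) (hsol2 : BergerBVPSolution y21 y22)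
    (hsame : y12 0 = y22 0) (hle : exp (y12 0) ≤ 4) (hK0 : y11 0 = y21 0) :
    ∀ x ∈ Icc (0 : ℝ) 1, y11 x = y21 x ∧ y12 x = y22 x := by
  obtain ⟨hnear1, hnear2⟩ := hsol1.eventuallyEq_nhdsGT hsol2 hsame hK0 hle
  have heq1 := eqOn_Ioc_of_eventuallyEq_nhdsGT hsol1.analytic1 hsol2.analytic1 hnear1
  have heq2 := eqOn_Ioc_of_eventuallyEq_nhdsGT hsol1.analytic2 hsol2.analytic2 hnear2
  intro x hx
  rcases hx.1.eq_or_lt with rfl | hpos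
  · exact ⟨hK0, hsame⟩
  · exact ⟨heq1 ⟨hpos, hx.2⟩, heq2 ⟨hpos, hx.2⟩⟩

/-- two solutions of the Berger BVP with the same `phi(0) ≠ 1`,
`1/4 < phi(0) < 4`, and the same value `K(0)`, coincide on `[0,1]`. -/
theorem berger_unique_given_K0 (y11 y12 y21 y22 : ℝ → ℝ)
    (hsol1 : BergerBVPSolution y11 y12) (hsol2 : BergerBVPSolution y21 y22)
    (hsame : y12 0 = y22 0)
    (hne : Real.exp (y12 0) ≠ 1)
    (hlow : 1/4 < Real.exp (y12 0)) (hhigh : Real.exp (y12 0) < 4)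
    (hK0 : y11 0 = y21 0) :
    ∀ x ∈ Icc (0:ℝ) 1, y11 x = y21 x ∧ y12 x = y22 x :=
  berger_unique_given_K0_general y11 y12 y21 y22 hsol1 hsol2 hsame hhigh.le hK0
end

section
/- Let (y1, y2) be a solution of the Berger boundary value problem with phi(0) ≠ 1 (where K = exp∘y1, phi = exp∘y2). Then for every x ∈ (0,1) the quantity D(x) := (1−x^2)^2 + (1/36) x^2 (1−x^2)^2 (y2'(x))^2 + (4/3) x^2 K(x)^{-1/3} phi(x)^{-4/3} (4 phi(x) − 1) is nonnegative, and y1'(x) = 6 x^{-1} (1−x^2)^{-1} [ 1 + x^2 − sqrt(D(x)) ]. -/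
open Real Set

/-!
In the variable `-log x` the Einstein equations are Riccati equations for the principal curvatures
of the Berger spheres, coupled by a Hamiltonian constraint. Solving the constraint for the mean
curvature gives `y1'` up to the sign of `√D`. The sign is fixed by a barrier argument for each
principal curvature: the base one is positive at `x = 0` and can only cross zero upwards, the fibre
one is positive at `x = 1` and can only cross zero downwards. Hence both are positive on `(0, 1)`,
and so is the mean curvature.
-/

open Topology in
theorem pos_of_deriv_pos_of_eq_zero {g : ℝ → ℝ} {a b : ℝ} (hg : ContinuousOn g (Ico a b))
    (ha : 0 < g a) (hderiv : ∀ x ∈ Ioo a b, g x = 0 → 0 < deriv g x) :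
    ∀ x ∈ Ico a b, 0 < g x := by
  by_contra! ⟨x, hx, hgx⟩
  have hsub : Icc a x ⊆ Ico a b := Icc_subset_Ico_right hx.2
  obtain ⟨c, ⟨hcx, hgc⟩, hleast⟩ : ∃ c, IsLeast (Icc a x ∩ g ⁻¹' Iic 0) c :=
    (isCompact_Icc.of_isClosed_subset
      ((hg.mono hsub).preimage_isClosed_of_isClosed isClosed_Icc isClosed_Iic)
      inter_subset_left).exists_isLeast ⟨x, right_mem_Icc.2 hx.1, hgx⟩
  have hac : a < c := hcx.1.lt_of_ne (by rintro rfl; exact ha.not_ge hgc)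
  have hpos_left : ∀ t ∈ Ico a c, 0 < g t := fun t ht => by
    by_contra! h
    exact ht.2.not_ge (hleast ⟨⟨ht.1, ht.2.le.trans hcx.2⟩, h⟩)
  have hleft : ∀ᶠ t in 𝓝[<] c, t ∈ Ico a c := Ico_mem_nhdsLT hac
  have hgc0 : g c = 0 := by
    have hcont : ContinuousWithinAt g (Ico a c) c :=
      (hg c (hsub hcx)).mono fun t ht => hsub ⟨ht.1, ht.2.le.trans hcx.2⟩
    rw [ContinuousWithinAt, nhdsWithin_Ico_eq_nhdsLT hac] at hcont
    exact le_antisymm hgc (ge_of_tendsto hcont (hleft.mono fun t ht => (hpos_left t ht).le))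
  have hsign := eventually_nhdsWithin_sign_eq_of_deriv_pos
    (hderiv c ⟨hac, hcx.2.trans_lt hx.2⟩ hgc0) hgc0
  obtain ⟨t, ht, hsign_t⟩ := (hleft.and (hsign.filter_mono nhdsWithin_le_nhds)).exists
  rw [sign_pos (hpos_left t ht), sign_neg (sub_neg.2 ht.2)] at hsign_t
  exact absurd hsign_t (by decide)

theorem pos_of_deriv_neg_of_eq_zero {g : ℝ → ℝ} {a b : ℝ} (hg : ContinuousOn g (Ioc a b))
    (hb : 0 < g b) (hderiv : ∀ x ∈ Ioo a b, g x = 0 → deriv g x < 0) :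
    ∀ x ∈ Ioc a b, 0 < g x := by
  have hreflect : ∀ x ∈ Ico (-b) (-a), 0 < g (-x) := by
    refine pos_of_deriv_pos_of_eq_zero
      (hg.comp continuousOn_neg fun x hx => ⟨lt_neg.2 hx.2, neg_le.2 hx.1⟩)
      (by rwa [neg_neg]) fun x hx hzero => ?_
    rw [deriv_comp_neg]
    exact neg_pos.2 (hderiv (-x) ⟨lt_neg.2 hx.2, neg_lt.2 hx.1⟩ hzero)
  intro x hx
  simpa only [neg_neg] using hreflect (-x) ⟨neg_le_neg hx.2, neg_lt_neg hx.1⟩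

/-- A solution of the Berger Einstein system without boundary conditions: a pair `(y1, y2)` that is
`C¹` on `[0, 1]` (realized as globally `C¹` functions), twice differentiable on `(0, 1)`, and
satisfies (E1)–(E3) there. -/
structure IsBergerEinsteinSolution (y1 y2 : ℝ → ℝ) : Prop where
  contDiff₁ : ContDiff ℝ 1 y1
  contDiff₂ : ContDiff ℝ 1 y2
  differentiableAt_deriv₁ : ∀ x ∈ Ioo (0 : ℝ) 1, DifferentiableAt ℝ (deriv y1) x
  differentiableAt_deriv₂ : ∀ x ∈ Ioo (0 : ℝ) 1, DifferentiableAt ℝ (deriv y2) x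
  eqE1 : ∀ x ∈ Ioo (0 : ℝ) 1, BergerE1 y1 y2 x = 0
  eqE2 : ∀ x ∈ Ioo (0 : ℝ) 1, BergerE2 y1 y2 x = 0
  eqE3 : ∀ x ∈ Ioo (0 : ℝ) 1, BergerE3 y1 y2 x = 0

theorem BergerBVPSolution.isBergerEinsteinSolution {y1 y2 : ℝ → ℝ}
    (hsol : BergerBVPSolution y1 y2) : IsBergerEinsteinSolution y1 y2 where
  contDiff₁ := hsol.smooth1.of_le (by simp)
  contDiff₂ := hsol.smooth2.of_le (by simp)
  differentiableAt_deriv₁ x _ :=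
    (contDiff_infty_iff_deriv.1 hsol.smooth1).2.differentiable (by simp) x
  differentiableAt_deriv₂ x _ :=
    (contDiff_infty_iff_deriv.1 hsol.smooth2).2.differentiable (by simp) x
  eqE1 := hsol.eqE1
  eqE2 := hsol.eqE2
  eqE3 := hsol.eqE3

/-- The principal curvatures of the Berger spheres, rescaled by `1 - x²`: `m = 1` is the one in the
base directions, `m = -2` the one in the fibre direction, and `m = 0` is their mean. They are
logarithmic derivatives with respect to `-log x` of the lengths `(1 - x²) / (2x) · (K φᵐ)^{1/6}`. -/
noncomputable def bergerCurvature (m : ℝ) (y1 y2 : ℝ → ℝ) (x : ℝ) : ℝ :=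
  1 + x ^ 2 - x * (1 - x ^ 2) * (deriv y1 x + m * deriv y2 x) / 6

/-- `K^{-1/3} φ^{-1/3}`, the inverse square of the length scale of the base directions. -/
noncomputable def bergerBaseTerm (y1 y2 : ℝ → ℝ) (x : ℝ) : ℝ :=
  Real.exp (y1 x) ^ (-(1 : ℝ) / 3) * Real.exp (y2 x) ^ (-(1 : ℝ) / 3)

/-- `K^{-1/3} φ^{-4/3}`, the square of the length scale of the fibre divided by the fourth power
of that of the base directions. -/
noncomputable def bergerFibreTerm (y1 y2 : ℝ → ℝ) (x : ℝ) : ℝ :=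
  Real.exp (y1 x) ^ (-(1 : ℝ) / 3) * Real.exp (y2 x) ^ (-(4 : ℝ) / 3)

/-- The function `D` under the square root in the first-order formula for `y1'`. -/
noncomputable def bergerDiscriminant (y1 y2 : ℝ → ℝ) (x : ℝ) : ℝ :=
  (1 - x ^ 2) ^ 2 + (1 / 36) * x ^ 2 * (1 - x ^ 2) ^ 2 * (deriv y2 x) ^ 2
    + (4 / 3) * x ^ 2 * Real.exp (y1 x) ^ (-(1 : ℝ) / 3) * Real.exp (y2 x) ^ (-(4 : ℝ) / 3)
      * (4 * Real.exp (y2 x) - 1)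

section Pointwise

variable {y1 y2 : ℝ → ℝ} {x : ℝ}

theorem bergerBaseTerm_pos (y1 y2 : ℝ → ℝ) (x : ℝ) : 0 < bergerBaseTerm y1 y2 x := by
  unfold bergerBaseTerm
  positivity

theorem bergerFibreTerm_pos (y1 y2 : ℝ → ℝ) (x : ℝ) : 0 < bergerFibreTerm y1 y2 x := by
  unfold bergerFibreTerm
  positivity

theorem bergerFibreTerm_mul_exp :
    bergerFibreTerm y1 y2 x * Real.exp (y2 x) = bergerBaseTerm y1 y2 x := by
  rw [bergerFibreTerm, bergerBaseTerm, mul_assoc, ← Real.rpow_add_one (Real.exp_ne_zero _)]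
  norm_num

theorem bergerDiscriminant_eq :
    bergerDiscriminant y1 y2 x = (1 - x ^ 2) ^ 2 + (x * (1 - x ^ 2) * deriv y2 x / 6) ^ 2
      + 4 / 3 * x ^ 2 * (4 * bergerBaseTerm y1 y2 x - bergerFibreTerm y1 y2 x) := by
  rw [← bergerFibreTerm_mul_exp, bergerDiscriminant, bergerFibreTerm]
  ring

theorem mul_one_sub_sq_pos (hx : x ∈ Ioo (0 : ℝ) 1) : 0 < x * (1 - x ^ 2) :=
  mul_pos hx.1 (sub_pos.2 (pow_lt_one₀ hx.1.le hx.2 two_ne_zero))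

theorem mul_bergerE1 (y1 y2 : ℝ → ℝ) (hx : x * (1 - x ^ 2) ≠ 0) :
    x * (1 - x ^ 2) ^ 2 * BergerE1 y1 y2 x
      = x * (1 - x ^ 2) ^ 2 * (deriv (deriv y1) x + deriv y1 x ^ 2 / 6 + deriv y2 x ^ 2 / 3)
        - (1 - x ^ 2) * (1 + 3 * x ^ 2) * deriv y1 x := by
  obtain ⟨hx0, hc⟩ := mul_ne_zero_iff.1 hx
  rw [BergerE1]
  field_simp

theorem mul_bergerE2 (y1 y2 : ℝ → ℝ) (hx : x * (1 - x ^ 2) ≠ 0) :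
    x * (1 - x ^ 2) ^ 2 * BergerE2 y1 y2 x
      = x * (1 - x ^ 2) ^ 2 * (deriv (deriv y1) x + deriv y1 x ^ 2 / 2)
        - (1 - x ^ 2) * (5 + 7 * x ^ 2) * deriv y1 x
        + 16 * x * (3 - 4 * bergerBaseTerm y1 y2 x + bergerFibreTerm y1 y2 x) := by
  obtain ⟨hx0, hc⟩ := mul_ne_zero_iff.1 hx
  rw [BergerE2, bergerBaseTerm, bergerFibreTerm]
  field_simp
  ring

theorem mul_bergerE3 (y1 y2 : ℝ → ℝ) (hx : x * (1 - x ^ 2) ≠ 0) :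
    x * (1 - x ^ 2) ^ 2 * BergerE3 y1 y2 x
      = x * (1 - x ^ 2) ^ 2 * (deriv (deriv y2) x + deriv y1 x * deriv y2 x / 2)
        - 2 * (1 - x ^ 2) * (1 + 2 * x ^ 2) * deriv y2 x
        + 32 * x * (bergerFibreTerm y1 y2 x - bergerBaseTerm y1 y2 x) := by
  obtain ⟨hx0, hc⟩ := mul_ne_zero_iff.1 hx
  have hphi : bergerFibreTerm y1 y2 x = bergerBaseTerm y1 y2 x * (Real.exp (y2 x))⁻¹ := by
    rw [← bergerFibreTerm_mul_exp, mul_inv_cancel_right₀ (Real.exp_ne_zero _)]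
  rw [hphi, BergerE3, bergerBaseTerm]
  field_simp

/-- The difference of (E2) and (E1) contains no second derivatives. -/
theorem bergerCurvature_zero_sq (hx : x * (1 - x ^ 2) ≠ 0) (hE1 : BergerE1 y1 y2 x = 0)
    (hE2 : BergerE2 y1 y2 x = 0) :
    bergerCurvature 0 y1 y2 x ^ 2 = bergerDiscriminant y1 y2 x := by
  have hE1' := mul_bergerE1 y1 y2 hx
  have hE2' := mul_bergerE2 y1 y2 hx
  rw [hE1, mul_zero] at hE1'
  rw [hE2, mul_zero] at hE2'
  rw [bergerDiscriminant_eq, bergerCurvature]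
  linear_combination x / 12 * (hE1' - hE2')

theorem hasDerivAt_bergerCurvature (m : ℝ) (h1 : DifferentiableAt ℝ (deriv y1) x)
    (h2 : DifferentiableAt ℝ (deriv y2) x) :
    HasDerivAt (bergerCurvature m y1 y2)
      (2 * x - ((1 - 3 * x ^ 2) * (deriv y1 x + m * deriv y2 x)
        + x * (1 - x ^ 2) * (deriv (deriv y1) x + m * deriv (deriv y2) x)) / 6) x := by
  have hsq : HasDerivAt (fun t : ℝ => t ^ 2) (2 * x) x := by simpa using hasDerivAt_pow 2 x
  have hweight : HasDerivAt (fun t : ℝ => t * (1 - t ^ 2)) (1 - 3 * x ^ 2) x :=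
    ((hasDerivAt_id' x).fun_mul (hsq.const_sub 1)).congr_deriv (by ring)
  have hcomb : HasDerivAt (fun t => deriv y1 t + m * deriv y2 t)
      (deriv (deriv y1) x + m * deriv (deriv y2) x) x :=
    h1.hasDerivAt.fun_add (h2.hasDerivAt.const_mul m)
  exact (hsq.const_add 1).fun_sub ((hweight.fun_mul hcomb).div_const 6)

theorem bergerCurvature_riccati (m : ℝ) (hx : x * (1 - x ^ 2) ≠ 0)
    (h1 : DifferentiableAt ℝ (deriv y1) x) (h2 : DifferentiableAt ℝ (deriv y2) x)
    (hE2 : BergerE2 y1 y2 x = 0) (hE3 : BergerE3 y1 y2 x = 0) :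
    x * (1 - x ^ 2) * deriv (bergerCurvature m y1 y2) x
      = bergerCurvature m y1 y2 x * (3 * bergerCurvature 0 y1 y2 x - 2 * x ^ 2)
        - 3 * (1 - x ^ 2) ^ 2 - 8 / 3 * x ^ 2 * (2 * (m + 2) * bergerBaseTerm y1 y2 x
          - (2 * m + 1) * bergerFibreTerm y1 y2 x) := by
  have hE2' := mul_bergerE2 y1 y2 hx
  have hE3' := mul_bergerE3 y1 y2 hx
  rw [hE2, mul_zero] at hE2'
  rw [hE3, mul_zero] at hE3'
  rw [(hasDerivAt_bergerCurvature m h1 h2).deriv]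
  simp only [bergerCurvature]
  linear_combination x / 6 * (hE2' + m * hE3')

end Pointwise

namespace IsBergerEinsteinSolution

variable {y1 y2 : ℝ → ℝ}

theorem continuous_bergerCurvature (hsol : IsBergerEinsteinSolution y1 y2) (m : ℝ) :
    Continuous (bergerCurvature m y1 y2) := by
  have h1 := hsol.contDiff₁.continuous_deriv_one
  have h2 := hsol.contDiff₂.continuous_deriv_one
  unfold bergerCurvature
  fun_prop

theorem bergerCurvature_base_pos (hsol : IsBergerEinsteinSolution y1 y2) :
    ∀ x ∈ Ico (0 : ℝ) 1, 0 < bergerCurvature 1 y1 y2 x := by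
  refine pos_of_deriv_pos_of_eq_zero (hsol.continuous_bergerCurvature 1).continuousOn
    (by simp [bergerCurvature]) fun x hx hzero => ?_
  have hw := mul_one_sub_sq_pos hx
  have hconstraint := bergerCurvature_zero_sq hw.ne' (hsol.eqE1 x hx) (hsol.eqE2 x hx)
  have hriccati := bergerCurvature_riccati 1 hw.ne' (hsol.differentiableAt_deriv₁ x hx)
    (hsol.differentiableAt_deriv₂ x hx) (hsol.eqE2 x hx) (hsol.eqE3 x hx)
  have hmean : bergerCurvature 0 y1 y2 x = x * (1 - x ^ 2) * deriv y2 x / 6 := by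
    unfold bergerCurvature at hzero ⊢
    linear_combination hzero
  rw [bergerDiscriminant_eq, hmean] at hconstraint
  rw [hzero, zero_mul] at hriccati
  have hbase := bergerBaseTerm_pos y1 y2 x
  have hx0 := hx.1
  refine pos_of_mul_pos_right ?_ hw.le
  calc 0 < 3 * (1 - x ^ 2) ^ 2 + 16 * x ^ 2 * bergerBaseTerm y1 y2 x := by positivity
    _ = x * (1 - x ^ 2) * deriv (bergerCurvature 1 y1 y2) x := by
        linear_combination -hriccati - 6 * hconstraint

theorem bergerCurvature_fibre_pos (hsol : IsBergerEinsteinSolution y1 y2) :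
    ∀ x ∈ Ioc (0 : ℝ) 1, 0 < bergerCurvature (-2) y1 y2 x := by
  refine pos_of_deriv_neg_of_eq_zero (hsol.continuous_bergerCurvature (-2)).continuousOn
    (by norm_num [bergerCurvature]) fun x hx hzero => ?_
  have hw := mul_one_sub_sq_pos hx
  have hriccati := bergerCurvature_riccati (-2) hw.ne' (hsol.differentiableAt_deriv₁ x hx)
    (hsol.differentiableAt_deriv₂ x hx) (hsol.eqE2 x hx) (hsol.eqE3 x hx)
  rw [hzero, zero_mul] at hriccati
  have hfibre := bergerFibreTerm_pos y1 y2 x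
  have hx0 := hx.1
  refine neg_of_mul_neg_right ?_ hw.le
  calc x * (1 - x ^ 2) * deriv (bergerCurvature (-2) y1 y2) x
      = -(3 * (1 - x ^ 2) ^ 2 + 8 * x ^ 2 * bergerFibreTerm y1 y2 x) := by
        linear_combination hriccati
    _ < 0 := neg_neg_of_pos (by positivity)

theorem bergerCurvature_zero_pos (hsol : IsBergerEinsteinSolution y1 y2) :
    ∀ x ∈ Ioo (0 : ℝ) 1, 0 < bergerCurvature 0 y1 y2 x := by
  intro x hx
  have hbase := hsol.bergerCurvature_base_pos x (Ioo_subset_Ico_self hx)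
  have hfibre := hsol.bergerCurvature_fibre_pos x (Ioo_subset_Ioc_self hx)
  unfold bergerCurvature at hbase hfibre ⊢
  linarith

end IsBergerEinsteinSolution

theorem berger_y1_deriv_formula_general {y1 y2 : ℝ → ℝ} (hsol : IsBergerEinsteinSolution y1 y2) :
    ∀ x ∈ Ioo (0 : ℝ) 1, 0 ≤ bergerDiscriminant y1 y2 x ∧
      deriv y1 x = 6 * x⁻¹ * (1 - x ^ 2)⁻¹ *
        (1 + x ^ 2 - Real.sqrt (bergerDiscriminant y1 y2 x)) := by
  intro x hx
  have hw := mul_one_sub_sq_pos hx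
  obtain ⟨hx0, hc⟩ := mul_ne_zero_iff.1 hw.ne'
  rw [← bergerCurvature_zero_sq hw.ne' (hsol.eqE1 x hx) (hsol.eqE2 x hx),
    Real.sqrt_sq (hsol.bergerCurvature_zero_pos x hx).le]
  refine ⟨sq_nonneg _, ?_⟩
  rw [bergerCurvature]
  field_simp
  ring

/-- the first-order expression of `y1'` for a solution of the Berger BVP
with `phi(0) ≠ 1`: with
`D(x) = (1−x²)² + (1/36)x²(1−x²)²(y2')² + (4/3)x² K^{-1/3} phi^{-4/3}(4phi − 1)`,
one has `D ≥ 0` and `y1' = 6x⁻¹(1−x²)⁻¹(1 + x² − √D)` on `(0,1)`. -/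
theorem berger_y1_deriv_formula (y1 y2 : ℝ → ℝ)
    (hsol : BergerBVPSolution y1 y2)
    (hphi0 : Real.exp (y2 0) ≠ 1) :
    ∀ x ∈ Ioo (0:ℝ) 1,
      0 ≤ (1 - x^2)^2 + (1/36) * x^2 * (1 - x^2)^2 * (deriv y2 x)^2
        + (4/3) * x^2 * Real.exp (y1 x) ^ (-(1:ℝ)/3) * Real.exp (y2 x) ^ (-(4:ℝ)/3)
          * (4 * Real.exp (y2 x) - 1) ∧
      deriv y1 x = 6 * x⁻¹ * (1 - x^2)⁻¹ *
        (1 + x^2 - Real.sqrt ((1 - x^2)^2 + (1/36) * x^2 * (1 - x^2)^2 * (deriv y2 x)^2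
          + (4/3) * x^2 * Real.exp (y1 x) ^ (-(1:ℝ)/3) * Real.exp (y2 x) ^ (-(4:ℝ)/3)
            * (4 * Real.exp (y2 x) - 1))) :=
  berger_y1_deriv_formula_general hsol.isBergerEinsteinSolution
end
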